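/- arXiv:2210.06062 — 2 statements merged into one kernel-verified Lean document; each statement's English description precedes it below -/
import Mathlib

section
/- (Uniqueness for the first order linear ODE with specular derivatives) Let U = (a, b) ⊆ ℝ be an open interval, p : ℝ → ℝ continuous on U, S = {s₁ < s₂ < ⋯ < s_k} ⊂ U a finite set, and f : ℝ → ℝ a function that is continuous at every point of U \ S, has a jump discontinuity at each s ∈ S, and whose one-sided limits f(s] and f[s) exist as real numbers at each s ∈ S. Fix x₀ ∈ U \ S and y₀ ∈ ℝ. Then there is exactly one function u : U → ℝ that is continuous on U, satisfies u(x₀) = y₀, and for which there exist values c₁, …, c_k ∈ ℝ such that u is specularly differentiable at every x ∈ U and u^S(x) + p(x)·u(x) = f̄(x) for all x ∈ U, where f̄ agrees with f on U \ S and f̄(sⱼ) = cⱼ for each j. -/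
open Filter Topology Set

/-- The combination function `A(α,β)` from the paper: the slope of the specular
tangent determined by one-sided slopes `α` (right) and `β` (left). -/
noncomputable def specA (α β : ℝ) : ℝ :=
  if α + β = 0 then 0
  else (α * β - 1 + Real.sqrt ((α ^ 2 + 1) * (β ^ 2 + 1))) / (α + β)

/-- `HasSpecData f x₀ L α β` means: the left and right limits of `f` at `x₀` both
exist and are equal to `L`, the right specular derivative of `f` at `x₀` is `α`,
and the left specular derivative of `f` at `x₀` is `β`. -/
def HasSpecData (f : ℝ → ℝ) (x₀ L α β : ℝ) : Prop :=
  Tendsto f (𝓝[<] x₀) (𝓝 L) ∧ Tendsto f (𝓝[>] x₀) (𝓝 L) ∧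
    Tendsto (fun x => (f x - L) / (x - x₀)) (𝓝[>] x₀) (𝓝 α) ∧
    Tendsto (fun x => (f x - L) / (x - x₀)) (𝓝[<] x₀) (𝓝 β)

/-- `f` is specularly differentiable at `x₀`. -/
def SpecDifferentiableAt (f : ℝ → ℝ) (x₀ : ℝ) : Prop :=
  ∃ L α β, HasSpecData f x₀ L α β

/-- `f` is specularly differentiable at `x₀` with specular derivative `d`. -/
def HasSpecDerivAt (f : ℝ → ℝ) (x₀ d : ℝ) : Prop :=
  ∃ L α β, HasSpecData f x₀ L α β ∧ d = specA α β

/-!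
Writing slopes as angles, `A(α, β) = tan ((arctan α + arctan β) / 2)`, so a specular derivative lies
between the two one-sided derivatives. Uniqueness needs nothing more: let `v` be a solution, `u` the
one given by variation of constants, and `P` a primitive of `p`. Since `u` is differentiable off
`S`, the value `0` lies between the one-sided derivatives of `exp P * (v - u)` there, and a
continuous function with this property outside a countable set is constant: otherwise, after a
change of sign and a small tilt, its first upcrossing of a level not attained on `S` has
nonnegative slopes on both sides, although a negative number lies between them.

For existence, variation of constants gives one-sided derivatives everywhere because `f` has
one-sided limits; the free values of `f` on `S` are then read off from the equation.
-/

theorem specA_eq_tan (α β : ℝ) : specA α β = Real.tan ((Real.arctan α + Real.arctan β) / 2) := by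
  obtain ⟨x, hx, rfl⟩ : ∃ x, x = Real.arctan α ∧ Real.tan x = α := ⟨_, rfl, Real.tan_arctan α⟩
  obtain ⟨y, hy, rfl⟩ : ∃ y, y = Real.arctan β ∧ Real.tan y = β := ⟨_, rfl, Real.tan_arctan β⟩
  rw [← hx, ← hy]
  have hcx : 0 < Real.cos x := hx ▸ Real.cos_arctan_pos _
  have hcy : 0 < Real.cos y := hy ▸ Real.cos_arctan_pos _
  set z := (x + y) / 2 with hz
  have hcz : 0 < Real.cos z := by
    apply Real.cos_pos_of_mem_Ioo
    constructor <;> linarith [Real.neg_pi_div_two_lt_arctan (Real.tan x),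
      Real.arctan_lt_pi_div_two (Real.tan x), Real.neg_pi_div_two_lt_arctan (Real.tan y),
      Real.arctan_lt_pi_div_two (Real.tan y)]
  have hadd : Real.tan x + Real.tan y =
      2 * Real.sin z * Real.cos z / (Real.cos x * Real.cos y) := by
    rw [← Real.sin_two_mul, hz, mul_div_cancel₀ _ two_ne_zero, Real.sin_add,
      Real.tan_eq_sin_div_cos, Real.tan_eq_sin_div_cos]
    field_simp
  have hsqrt : √((Real.tan x ^ 2 + 1) * (Real.tan y ^ 2 + 1)) =
      1 / (Real.cos x * Real.cos y) := by
    rw [Real.sqrt_mul (by positivity), add_comm, add_comm _ (1 : ℝ), one_div, mul_inv,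
      ← Real.inv_sqrt_one_add_tan_sq hcx, ← Real.inv_sqrt_one_add_tan_sq hcy, inv_inv, inv_inv]
  have hmul : Real.tan x * Real.tan y - 1 + 1 / (Real.cos x * Real.cos y) =
      2 * Real.sin z ^ 2 / (Real.cos x * Real.cos y) := by
    have hcos : Real.cos x * Real.cos y - Real.sin x * Real.sin y = 1 - 2 * Real.sin z ^ 2 := by
      rw [← Real.cos_add, ← Real.cos_two_mul_eq_one_sub, hz, mul_div_cancel₀ _ two_ne_zero]
    rw [Real.tan_eq_sin_div_cos, Real.tan_eq_sin_div_cos]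
    field_simp
    linear_combination -hcos
  rw [specA, hsqrt, hmul, hadd, Real.tan_eq_sin_div_cos z]
  rcases eq_or_ne (Real.sin z) 0 with hsz | hsz
  · simp [hsz]
  · rw [if_neg (by positivity)]
    field_simp

theorem specA_self (α : ℝ) : specA α α = α := by
  rw [specA_eq_tan, add_self_div_two, Real.tan_arctan]

theorem specA_mem_uIcc (α β : ℝ) : specA α β ∈ uIcc α β := by
  have hmid : (Real.arctan α + Real.arctan β) / 2 ∈ uIcc (Real.arctan α) (Real.arctan β) := by
    rw [mem_uIcc]
    grind
  have hmono : MonotoneOn Real.tan (uIcc (Real.arctan α) (Real.arctan β)) :=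
    Real.strictMonoOn_tan.monotoneOn.mono <|
      ordConnected_Ioo.uIcc_subset (Real.arctan_mem_Ioo α) (Real.arctan_mem_Ioo β)
  simpa only [specA_eq_tan, Real.tan_arctan] using hmono.mapsTo_uIcc hmid

theorem hasSpecDerivAt_iff_of_continuousAt {u : ℝ → ℝ} {x d : ℝ} (hu : ContinuousAt u x) :
    HasSpecDerivAt u x d ↔ ∃ α β, HasDerivWithinAt u α (Ioi x) x ∧
      HasDerivWithinAt u β (Iio x) x ∧ d = specA α β := by
  have hl : Tendsto u (𝓝[<] x) (𝓝 (u x)) := hu.tendsto.mono_left nhdsWithin_le_nhds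
  have hr : Tendsto u (𝓝[>] x) (𝓝 (u x)) := hu.tendsto.mono_left nhdsWithin_le_nhds
  simp only [hasDerivWithinAt_iff_tendsto_slope' self_notMem_Ioi,
    hasDerivWithinAt_iff_tendsto_slope' self_notMem_Iio, slope_fun_def_field]
  constructor
  · rintro ⟨L, α, β, ⟨hL, -, hα, hβ⟩, hd⟩
    obtain rfl := tendsto_nhds_unique hL hl
    exact ⟨α, β, hα, hβ, hd⟩
  · rintro ⟨α, β, hα, hβ, hd⟩
    exact ⟨u x, α, β, ⟨hl, hr, hα, hβ⟩, hd⟩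

theorem hasDerivAt_of_Iio_of_Ioi {E : Type*} [NormedAddCommGroup E] [NormedSpace ℝ E]
    {u : ℝ → E} {x : ℝ} {d : E} (hl : HasDerivWithinAt u d (Iio x) x)
    (hr : HasDerivWithinAt u d (Ioi x) x) : HasDerivAt u d x := by
  simpa [Iic_union_Ici] using hl.Iic_of_Iio.union hr.Ici_of_Ioi

/-- `d` is an intermediate derivative of `h` at `x` if `h` has one-sided derivatives at `x` and `d`
lies between them. A specular derivative of a continuous function is one, and, unlike specular
derivatives, intermediate derivatives obey the sum and product rules with a differentiable
function. -/
def HasIntermediateDerivAt (h : ℝ → ℝ) (d x : ℝ) : Prop :=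
  ∃ α β, HasDerivWithinAt h α (Ioi x) x ∧ HasDerivWithinAt h β (Iio x) x ∧ d ∈ uIcc α β

theorem HasSpecDerivAt.hasIntermediateDerivAt {u : ℝ → ℝ} {x d : ℝ} (hd : HasSpecDerivAt u x d)
    (hu : ContinuousAt u x) : HasIntermediateDerivAt u d x := by
  obtain ⟨α, β, hα, hβ, rfl⟩ := (hasSpecDerivAt_iff_of_continuousAt hu).1 hd
  exact ⟨α, β, hα, hβ, specA_mem_uIcc α β⟩

namespace HasIntermediateDerivAt

variable {h g : ℝ → ℝ} {d e x : ℝ}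

theorem hasDerivAt_add (hg : HasDerivAt g e x) (hh : HasIntermediateDerivAt h d x) :
    HasIntermediateDerivAt (fun z => g z + h z) (e + d) x := by
  obtain ⟨α, β, hα, hβ, hd⟩ := hh
  refine ⟨e + α, e + β, hg.hasDerivWithinAt.add hα, hg.hasDerivWithinAt.add hβ, ?_⟩
  exact image_const_add_uIcc e α β ▸ mem_image_of_mem _ hd

theorem hasDerivAt_mul (hg : HasDerivAt g e x) (hh : HasIntermediateDerivAt h d x) :
    HasIntermediateDerivAt (fun z => g z * h z) (e * h x + g x * d) x := by
  obtain ⟨α, β, hα, hβ, hd⟩ := hh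
  refine ⟨e * h x + g x * α, e * h x + g x * β, hg.hasDerivWithinAt.mul hα,
    hg.hasDerivWithinAt.mul hβ, ?_⟩
  rw [← image_const_add_uIcc, ← image_const_mul_uIcc]
  exact mem_image_of_mem _ (mem_image_of_mem _ hd)

theorem neg (hh : HasIntermediateDerivAt h d x) :
    HasIntermediateDerivAt (fun z => -h z) (-d) x := by
  simpa using hasDerivAt_mul (hasDerivAt_const x (-1)) hh

theorem nonneg_of_frequently (hh : HasIntermediateDerivAt h d x)
    (hr : ∃ᶠ z in 𝓝[>] x, h x ≤ h z) (hl : ∃ᶠ z in 𝓝[<] x, h z ≤ h x) : 0 ≤ d := by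
  obtain ⟨α, β, hα, hβ, hd⟩ := hh
  rw [hasDerivWithinAt_iff_tendsto_slope' self_notMem_Ioi, slope_fun_def_field] at hα
  rw [hasDerivWithinAt_iff_tendsto_slope' self_notMem_Iio, slope_fun_def_field] at hβ
  have hα₀ : 0 ≤ α := by
    refine ge_of_tendsto_of_frequently hα ((hr.and_eventually self_mem_nhdsWithin).mono ?_)
    rintro z ⟨hz, hxz⟩
    exact div_nonneg (sub_nonneg.2 hz) (sub_nonneg.2 (le_of_lt hxz))
  have hβ₀ : 0 ≤ β := by
    refine ge_of_tendsto_of_frequently hβ ((hl.and_eventually self_mem_nhdsWithin).mono ?_)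
    rintro z ⟨hz, hzx⟩
    exact div_nonneg_of_nonpos (sub_nonpos.2 hz) (sub_nonpos.2 (le_of_lt hzx))
  exact (le_inf hα₀ hβ₀).trans hd.1

end HasIntermediateDerivAt

theorem exists_first_upcrossing {X Y : Type*} [ConditionallyCompleteLinearOrder X]
    [DenselyOrdered X] [TopologicalSpace X] [OrderTopology X] [LinearOrder Y] [TopologicalSpace Y]
    [OrderClosedTopology Y] {h : X → Y} {x y : X} {k : Y} (hxy : x ≤ y)
    (hc : ContinuousOn h (Icc x y)) (hx : h x < k) (hy : k < h y) :
    ∃ c ∈ Ioo x y, h c = k ∧ (∃ᶠ z in 𝓝[>] c, k ≤ h z) ∧ ∃ᶠ z in 𝓝[<] c, h z ≤ k := by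
  set T := {z ∈ Icc x y | k < h z}
  have hyT : y ∈ T := ⟨right_mem_Icc.2 hxy, hy⟩
  obtain ⟨c, hc_glb⟩ : ∃ c, IsGLB T c := ⟨sInf T, isGLB_csInf ⟨y, hyT⟩ ⟨x, fun z hz => hz.1.1⟩⟩
  have hc_mem : c ∈ Icc x y := ⟨hc_glb.2 fun z hz => hz.1.1, hc_glb.1 hyT⟩
  have hle : ∀ z ∈ Ico x c, h z ≤ k := fun z hz => not_lt.1 fun hkz =>
    hz.2.not_ge (hc_glb.1 ⟨⟨hz.1, hz.2.le.trans hc_mem.2⟩, hkz⟩)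
  have hfreq : ∃ᶠ z in 𝓝[≥] c, z ∈ T := hc_glb.frequently_mem ⟨y, hyT⟩
  have hkc : k ≤ h c :=
    ge_of_tendsto_of_frequently (f := h) (x := 𝓝[Icc x y] c) (hc c hc_mem) <|
      frequently_nhdsWithin_iff.2 <| (hfreq.filter_mono nhdsWithin_le_nhds).mono
        fun z hz => ⟨hz.2.le, hz.1⟩
  have hxc : x < c := hc_mem.1.lt_of_ne (by rintro rfl; exact hx.not_ge hkc)
  have hleft : ∀ᶠ z in 𝓝[<] c, h z ≤ k := by
    filter_upwards [Ico_mem_nhdsLT hxc] using hle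
  have : (𝓝[<] c).NeBot := nhdsLT_neBot_of_exists_lt ⟨x, hxc⟩
  have hck : h c ≤ k := by
    refine le_of_tendsto (f := h) (x := 𝓝[<] c) ?_ hleft
    rw [← nhdsWithin_Ico_eq_nhdsLT hxc]
    exact (hc c hc_mem).mono fun z hz => ⟨hz.1, hz.2.le.trans hc_mem.2⟩
  have hcy : c < y := hc_mem.2.lt_of_ne (by rintro rfl; exact hy.not_ge hck)
  refine ⟨c, ⟨hxc, hcy⟩, hck.antisymm hkc, ?_, hleft.frequently⟩
  rw [← Ioi_insert, nhdsWithin_insert, frequently_sup] at hfreq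
  refine (hfreq.resolve_left ?_).mono fun z hz => hz.2.le
  rw [frequently_pure]
  exact fun hcT => hck.not_gt hcT.2

theorem le_of_hasIntermediateDerivAt_neg {h : ℝ → ℝ} {S : Set ℝ} (hS : S.Countable) {x y : ℝ}
    (hxy : x ≤ y) (hc : ContinuousOn h (Icc x y))
    (hd : ∀ c ∈ Ioo x y \ S, ∃ d < 0, HasIntermediateDerivAt h d c) : h y ≤ h x := by
  by_contra! hlt
  obtain ⟨k, hkS, hxk, hky⟩ := ((hS.image h).dense_compl ℝ).exists_between hlt
  obtain ⟨c, hc_mem, rfl, hr, hl⟩ := exists_first_upcrossing hxy hc hxk hky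
  obtain ⟨d, hd_neg, hd⟩ := hd c ⟨hc_mem, fun hcS => hkS (mem_image_of_mem h hcS)⟩
  exact hd_neg.not_ge (hd.nonneg_of_frequently hr hl)

section OrdConnected

variable {h : ℝ → ℝ} {D S : Set ℝ}

theorem antitoneOn_of_hasIntermediateDerivAt_nonpos (hD : D.OrdConnected) (hS : S.Countable)
    (hc : ContinuousOn h D)
    (hd : ∀ c ∈ interior D \ S, ∃ d ≤ 0, HasIntermediateDerivAt h d c) : AntitoneOn h D := by
  intro x hx y hy hxy
  have hsub : Icc x y ⊆ D := hD.out hx hy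
  have htilt : ∀ ε > 0, -ε * y + h y ≤ -ε * x + h x := by
    intro ε hε
    refine le_of_hasIntermediateDerivAt_neg (h := fun z => -ε * z + h z) hS hxy
      ((continuousOn_const.mul continuousOn_id).add (hc.mono hsub)) fun c hc => ?_
    obtain ⟨d, hd₀, hd⟩ :=
      hd c ⟨interior_maximal (Ioo_subset_Icc_self.trans hsub) isOpen_Ioo hc.1, hc.2⟩
    exact ⟨-ε + d, by linarith,
      hd.hasDerivAt_add (hasDerivAt_const_mul (-ε))⟩
  have hlim : ∀ z, Tendsto (fun ε => -ε * z + h z) (𝓝[>] 0) (𝓝 (h z)) := fun z =>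
    (Continuous.tendsto' (by fun_prop) _ _ (by simp)).mono_left nhdsWithin_le_nhds
  exact le_of_tendsto_of_tendsto (hlim y) (hlim x) (eventually_nhdsWithin_of_forall htilt)

theorem eq_of_hasIntermediateDerivAt_zero (hD : D.OrdConnected) (hS : S.Countable)
    (hc : ContinuousOn h D) (hd : ∀ c ∈ interior D \ S, HasIntermediateDerivAt h 0 c) {x y : ℝ}
    (hx : x ∈ D) (hy : y ∈ D) : h x = h y := by
  wlog hxy : x ≤ y generalizing x y
  · exact (this hy hx (le_of_not_ge hxy)).symm
  refine le_antisymm ?_ ?_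
  · refine neg_le_neg_iff.1 (antitoneOn_of_hasIntermediateDerivAt_nonpos hD hS hc.fun_neg
      (fun c hc => ⟨0, le_rfl, ?_⟩) hx hy hxy)
    simpa using (hd c hc).neg
  · exact antitoneOn_of_hasIntermediateDerivAt_nonpos hD hS hc
      (fun c hc => ⟨0, le_rfl, hd c hc⟩) hx hy hxy

end OrdConnected

section Integral

open MeasureTheory

theorem aestronglyMeasurable_of_continuousOn_diff_countable {X Y : Type*} [TopologicalSpace X]
    [MeasurableSpace X] [OpensMeasurableSpace X] [MeasurableSingletonClass X] [TopologicalSpace Y]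
    [TopologicalSpace.PseudoMetrizableSpace Y] [SecondCountableTopologyEither X Y] {μ : Measure X}
    [NullSingletonClass μ] {U S : Set X} {g : X → Y} (hU : MeasurableSet U) (hS : S.Countable)
    (hg : ContinuousOn g (U \ S)) : AEStronglyMeasurable g (μ.restrict U) := by
  rw [← Measure.restrict_congr_set (sdiff_null_ae_eq_self (hS.measure_zero μ))]
  exact hg.aestronglyMeasurable (hU.diff hS.measurableSet)

theorem nhdsLE_inf_ae_le_nhdsLT {X : Type*} [PartialOrder X] [TopologicalSpace X]
    [MeasurableSpace X] (μ : Measure X) [NullSingletonClass μ] (x : X) :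
    𝓝[≤] x ⊓ ae μ ≤ 𝓝[<] x := by
  rw [← Iic_sdiff_right, sdiff_eq, nhdsWithin_inter']
  exact inf_le_inf_left _ (le_principal_iff.2 (compl_mem_ae_iff.2 (measure_singleton x)))

variable {E : Type*} [NormedAddCommGroup E]

theorem locallyIntegrableOn_of_tendsto_nhdsLT_nhdsGT {X : Type*} [LinearOrder X]
    [TopologicalSpace X] [OrderTopology X] [MeasurableSpace X] [OpensMeasurableSpace X]
    {μ : Measure X} [IsLocallyFiniteMeasure μ] {U : Set X} {g l r : X → E} (hU : IsOpen U)
    (hmeas : AEStronglyMeasurable g (μ.restrict U))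
    (hl : ∀ x ∈ U, Tendsto g (𝓝[<] x) (𝓝 (l x))) (hr : ∀ x ∈ U, Tendsto g (𝓝[>] x) (𝓝 (r x))) :
    LocallyIntegrableOn g U μ := by
  intro x hx
  have hfilter : ∀ s, StronglyMeasurableAtFilter g (𝓝[s] x) μ := fun s =>
    ⟨U, nhdsWithin_le_nhds (hU.mem_nhds hx), hmeas⟩
  have hleft : IntegrableAtFilter g (𝓝[<] x) μ :=
    (hl x hx).integrableAtFilter (hfilter _) (μ.finiteAt_nhdsWithin _ _)
  have hright : IntegrableAtFilter g (𝓝[>] x) μ :=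
    (hr x hx).integrableAtFilter (hfilter _) (μ.finiteAt_nhdsWithin _ _)
  have hpoint : IntegrableAtFilter g (pure x) μ :=
    ⟨{x}, mem_singleton x, integrableOn_singleton (by simp) isCompact_singleton.measure_lt_top⟩
  suffices IntegrableAtFilter g (𝓝 x) μ from this.filter_mono nhdsWithin_le_nhds
  rw [← nhdsLT_sup_nhdsGE, ← Ioi_insert, nhdsWithin_insert]
  exact IntegrableAtFilter.sup_iff.2 ⟨hleft, IntegrableAtFilter.sup_iff.2 ⟨hpoint, hright⟩⟩

variable [NormedSpace ℝ E] [CompleteSpace E] {U : Set ℝ}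

theorem hasDerivWithinAt_integral_of_tendsto_nhdsLT_nhdsGT {g l r : ℝ → E} (hUo : IsOpen U)
    (hU : U.OrdConnected) (hmeas : AEStronglyMeasurable g (volume.restrict U))
    (hl : ∀ x ∈ U, Tendsto g (𝓝[<] x) (𝓝 (l x))) (hr : ∀ x ∈ U, Tendsto g (𝓝[>] x) (𝓝 (r x)))
    {x₀ x : ℝ} (hx₀ : x₀ ∈ U) (hx : x ∈ U) :
    HasDerivWithinAt (fun z => ∫ t in x₀..z, g t) (l x) (Iio x) x ∧
      HasDerivWithinAt (fun z => ∫ t in x₀..z, g t) (r x) (Ioi x) x := by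
  have hint : IntervalIntegrable g volume x₀ x := (intervalIntegrable_iff' (by simp)).2 <|
    (locallyIntegrableOn_of_tendsto_nhdsLT_nhdsGT hUo hmeas hl hr).integrableOn_compact_subset
      (hU.uIcc_subset hx₀ hx) isCompact_uIcc
  have hfilter : ∀ s, StronglyMeasurableAtFilter g (𝓝[s] x) := fun s =>
    ⟨U, nhdsWithin_le_nhds (hUo.mem_nhds hx), hmeas⟩
  constructor
  · exact (intervalIntegral.integral_hasDerivWithinAt_of_tendsto_ae_right hint (s := Iic x)
      (hfilter _) ((hl x hx).mono_left (nhdsLE_inf_ae_le_nhdsLT volume x))).Iio_of_Iic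
  · exact (intervalIntegral.integral_hasDerivWithinAt_of_tendsto_ae_right hint (s := Ici x)
      (hfilter _) ((hr x hx).mono_left inf_le_left)).Ioi_of_Ici

theorem exists_hasDerivAt_of_continuousOn {g : ℝ → E} (hUo : IsOpen U) (hU : U.OrdConnected)
    (hg : ContinuousOn g U) : ∃ G : ℝ → E, ∀ x ∈ U, HasDerivAt G (g x) x := by
  rcases U.eq_empty_or_nonempty with rfl | ⟨x₀, hx₀⟩
  · exact ⟨0, fun x hx => hx.elim⟩
  · exact ⟨fun z => ∫ t in x₀..z, g t, fun x hx =>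
      intervalIntegral.integral_hasDerivAt_right
        (hg.mono (hU.uIcc_subset hx₀ hx)).intervalIntegrable
        (hg.stronglyMeasurableAtFilter hUo x hx) (hg.continuousAt (hUo.mem_nhds hx))⟩

end Integral

theorem hasDerivWithinAt_variation_of_constants {P G : ℝ → ℝ} {s : Set ℝ} {x q m : ℝ} (C : ℝ)
    (hP : HasDerivAt P q x) (hG : HasDerivWithinAt G (Real.exp (P x) * m) s x) :
    HasDerivWithinAt (fun z => Real.exp (-P z) * (C + G z))
      (m - q * (Real.exp (-P x) * (C + G x))) s x := by
  have hexp : Real.exp (-P x) * Real.exp (P x) = 1 := by simp [← Real.exp_add]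
  refine (hP.fun_neg.exp.hasDerivWithinAt.mul (hG.const_add C)).congr_deriv ?_
  linear_combination m * hexp

/-- `u` solves the initial value problem `u^S + p u = f` on `U`, `u x₀ = y₀`, for some choice `fbar`
of the values of `f` on the singular set `S`. -/
def IsSpecSolution (U S : Set ℝ) (p f : ℝ → ℝ) (x₀ y₀ : ℝ) (u : ℝ → ℝ) : Prop :=
  ContinuousOn u U ∧ u x₀ = y₀ ∧
    ∃ fbar : ℝ → ℝ, (∀ x, x ∉ S → fbar x = f x) ∧
      ∀ x ∈ U, ∃ d, HasSpecDerivAt u x d ∧ d + p x * u x = fbar x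

section LinearODE

open MeasureTheory

variable {U S : Set ℝ} {p f : ℝ → ℝ} {x₀ : ℝ}

theorem exists_oneSided_solution (hUo : IsOpen U) (hU : U.OrdConnected)
    (hp : ContinuousOn p U) (hf : AEStronglyMeasurable f (volume.restrict U))
    {l r : ℝ → ℝ} (hl : ∀ x ∈ U, Tendsto f (𝓝[<] x) (𝓝 (l x)))
    (hr : ∀ x ∈ U, Tendsto f (𝓝[>] x) (𝓝 (r x))) (hx₀ : x₀ ∈ U) (y₀ : ℝ) :
    ∃ u : ℝ → ℝ, u x₀ = y₀ ∧ ∀ x ∈ U, HasDerivWithinAt u (l x - p x * u x) (Iio x) x ∧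
      HasDerivWithinAt u (r x - p x * u x) (Ioi x) x := by
  obtain ⟨P, hP⟩ := exists_hasDerivAt_of_continuousOn hUo hU hp
  have hexp : ∀ x ∈ U, ContinuousAt (fun z => Real.exp (P z)) x := fun x hx =>
    (hP x hx).continuousAt.rexp
  have hmeas := ((continuousOn_of_forall_continuousAt hexp).aestronglyMeasurable
    hUo.measurableSet).mul hf
  have hG {x : ℝ} (hx : x ∈ U) := hasDerivWithinAt_integral_of_tendsto_nhdsLT_nhdsGT hUo hU hmeas
    (fun z hz => ((hexp z hz).tendsto.mono_left nhdsWithin_le_nhds).mul (hl z hz))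
    (fun z hz => ((hexp z hz).tendsto.mono_left nhdsWithin_le_nhds).mul (hr z hz)) hx₀ hx
  refine ⟨fun z => Real.exp (-P z) *
    (Real.exp (P x₀) * y₀ + ∫ t in x₀..z, Real.exp (P t) * f t), ?_, fun x hx => ⟨?_, ?_⟩⟩
  · simp [← mul_assoc, ← Real.exp_add]
  · exact hasDerivWithinAt_variation_of_constants _ (hP x hx) (hG hx).1
  · exact hasDerivWithinAt_variation_of_constants _ (hP x hx) (hG hx).2

theorem isSpecSolution_of_hasDerivWithinAt {l r u : ℝ → ℝ}
    (hu : ∀ x ∈ U, HasDerivWithinAt u (l x - p x * u x) (Iio x) x ∧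
      HasDerivWithinAt u (r x - p x * u x) (Ioi x) x)
    (hl : ∀ x ∈ U \ S, l x = f x) (hr : ∀ x ∈ U \ S, r x = f x) :
    IsSpecSolution U S p f x₀ (u x₀) u := by
  classical
  have hcont : ∀ x ∈ U, ContinuousAt u x := fun x hx =>
    continuousAt_iff_continuous_left'_right'.2
      ⟨(hu x hx).1.continuousWithinAt, (hu x hx).2.continuousWithinAt⟩
  have hspec : ∀ x ∈ U, HasSpecDerivAt u x (specA (r x - p x * u x) (l x - p x * u x)) :=
    fun x hx => (hasSpecDerivAt_iff_of_continuousAt (hcont x hx)).2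
      ⟨_, _, (hu x hx).2, (hu x hx).1, rfl⟩
  refine ⟨continuousOn_of_forall_continuousAt hcont, rfl,
    S.piecewise (fun x => specA (r x - p x * u x) (l x - p x * u x) + p x * u x) f,
    fun x hx => piecewise_eq_of_notMem _ _ _ hx, fun x hx => ⟨_, hspec x hx, ?_⟩⟩
  by_cases hxS : x ∈ S
  · rw [piecewise_eq_of_mem _ _ _ hxS]
  · rw [piecewise_eq_of_notMem _ _ _ hxS, hl x ⟨hx, hxS⟩, hr x ⟨hx, hxS⟩, specA_self,
      sub_add_cancel]

theorem eqOn_zero_of_hasIntermediateDerivAt (hUo : IsOpen U) (hU : U.OrdConnected)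
    (hS : S.Countable) (hp : ContinuousOn p U) {w : ℝ → ℝ} (hwc : ContinuousOn w U)
    (hw : ∀ x ∈ U \ S, HasIntermediateDerivAt w (-(p x * w x)) x) (hx₀ : x₀ ∈ U)
    (hw₀ : w x₀ = 0) : EqOn w 0 U := by
  obtain ⟨P, hP⟩ := exists_hasDerivAt_of_continuousOn hUo hU hp
  have hconst : ∀ x ∈ U, Real.exp (P x) * w x = Real.exp (P x₀) * w x₀ := by
    intro x hx
    refine eq_of_hasIntermediateDerivAt_zero (h := fun z => Real.exp (P z) * w z) hU hS
      (.mul (fun z hz => (hP z hz).continuousAt.rexp.continuousWithinAt) hwc) ?_ hx hx₀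
    rw [hUo.interior_eq]
    intro c hc
    convert (hw c hc).hasDerivAt_mul (hP c hc.1).exp using 1
    ring
  intro x hx
  simpa [hw₀] using hconst x hx

theorem IsSpecSolution.eqOn_of_hasDerivAt {y₀ : ℝ} {u v : ℝ → ℝ} (hUo : IsOpen U)
    (hU : U.OrdConnected) (hS : S.Countable) (hp : ContinuousOn p U) (hx₀ : x₀ ∈ U)
    (hv : IsSpecSolution U S p f x₀ y₀ v) (huc : ContinuousOn u U) (hu₀ : u x₀ = y₀)
    (hu : ∀ x ∈ U \ S, HasDerivAt u (f x - p x * u x) x) : EqOn v u U := by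
  obtain ⟨hvc, hv₀, fbar, hfbar, hv⟩ := hv
  suffices EqOn (fun z => -u z + v z) 0 U from fun x hx => neg_add_eq_zero.1 (this hx) |>.symm
  refine eqOn_zero_of_hasIntermediateDerivAt hUo hU hS hp (huc.fun_neg.add hvc) ?_ hx₀
    (by simp [hu₀, hv₀])
  intro x hx
  obtain ⟨d, hd, hode⟩ := hv x hx.1
  rw [hfbar x hx.2] at hode
  convert (hd.hasIntermediateDerivAt (hvc.continuousAt (hUo.mem_nhds hx.1))).hasDerivAt_add
    (hu x hx).fun_neg using 1
  linear_combination -hode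

theorem linear_ode_specular_uniqueness_general (hUo : IsOpen U) (hU : U.OrdConnected)
    (hS : S.Countable) (hp : ContinuousOn p U) (hcont : ∀ x ∈ U \ S, ContinuousAt f x)
    (hlim : ∀ s ∈ U ∩ S, ∃ l r : ℝ, Tendsto f (𝓝[<] s) (𝓝 l) ∧ Tendsto f (𝓝[>] s) (𝓝 r))
    (hx₀ : x₀ ∈ U) (y₀ : ℝ) :
    ∃ u, IsSpecSolution U S p f x₀ y₀ u ∧ ∀ v, IsSpecSolution U S p f x₀ y₀ v → EqOn v u U := by
  have hreg : ∀ x ∈ U \ S, ∀ s, Tendsto f (𝓝[s] x) (𝓝 (f x)) := fun x hx _ =>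
    (hcont x hx).tendsto.mono_left nhdsWithin_le_nhds
  have hlr : ∀ x ∈ U, ∃ l r : ℝ, Tendsto f (𝓝[<] x) (𝓝 l) ∧ Tendsto f (𝓝[>] x) (𝓝 r) := by
    intro x hx
    by_cases hxS : x ∈ S
    · exact hlim x ⟨hx, hxS⟩
    · exact ⟨f x, f x, hreg x ⟨hx, hxS⟩ _, hreg x ⟨hx, hxS⟩ _⟩
  choose! l r hl hr using hlr
  have hlf : ∀ x ∈ U \ S, l x = f x := fun x hx => tendsto_nhds_unique (hl x hx.1) (hreg x hx _)
  have hrf : ∀ x ∈ U \ S, r x = f x := fun x hx => tendsto_nhds_unique (hr x hx.1) (hreg x hx _)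
  obtain ⟨u, rfl, hu⟩ := exists_oneSided_solution hUo hU hp
    (aestronglyMeasurable_of_continuousOn_diff_countable hUo.measurableSet hS
      (continuousOn_of_forall_continuousAt hcont)) hl hr hx₀ y₀
  have hsol : IsSpecSolution U S p f x₀ (u x₀) u := isSpecSolution_of_hasDerivWithinAt hu hlf hrf
  refine ⟨u, hsol, fun v hv => hv.eqOn_of_hasDerivAt hUo hU hS hp hx₀ hsol.1 rfl fun x hx => ?_⟩
  have hux := hu x hx.1
  rw [hlf x hx, hrf x hx] at hux
  exact hasDerivAt_of_Iio_of_Ioi hux.1 hux.2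

end LinearODE

theorem linear_ode_specular_uniqueness (a b : ℝ) (hab : a < b) (p f : ℝ → ℝ)
    (hp : ContinuousOn p (Set.Ioo a b)) (S : Finset ℝ) (hS : ↑S ⊆ Set.Ioo a b)
    (hcont : ∀ x ∈ Set.Ioo a b, x ∉ S → ContinuousAt f x)
    (hjump : ∀ s ∈ S, ∃ l r : ℝ, Tendsto f (𝓝[<] s) (𝓝 l) ∧
      Tendsto f (𝓝[>] s) (𝓝 r) ∧ l ≠ r)
    (x₀ y₀ : ℝ) (hx₀ : x₀ ∈ Set.Ioo a b) (hx₀S : x₀ ∉ S) :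
    ∃ u : ℝ → ℝ,
      (ContinuousOn u (Set.Ioo a b) ∧ u x₀ = y₀ ∧
        ∃ fbar : ℝ → ℝ, (∀ x, x ∉ S → fbar x = f x) ∧
          ∀ x ∈ Set.Ioo a b, ∃ d, HasSpecDerivAt u x d ∧ d + p x * u x = fbar x) ∧
      ∀ v : ℝ → ℝ,
        (ContinuousOn v (Set.Ioo a b) ∧ v x₀ = y₀ ∧
          ∃ fbar : ℝ → ℝ, (∀ x, x ∉ S → fbar x = f x) ∧
            ∀ x ∈ Set.Ioo a b, ∃ d, HasSpecDerivAt v x d ∧ d + p x * v x = fbar x) →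
        ∀ x ∈ Set.Ioo a b, v x = u x :=
  linear_ode_specular_uniqueness_general isOpen_Ioo ordConnected_Ioo S.countable_toSet hp
    (fun x hx => hcont x hx.1 hx.2)
    (fun s hs => (hjump s hs.2).imp fun _ => .imp fun _ h => ⟨h.1, h.2.1⟩) hx₀ y₀
end

section
/- (Bound for the specularly directional derivative) Let n be a positive integer, g_R, g_L ∈ ℝⁿ, and u ∈ ℝⁿ a unit vector. Then −(‖g_R‖ + ‖g_L‖)/2 ≤ A(⟨g_R, u⟩, ⟨g_L, u⟩) ≤ (‖g_R‖ + ‖g_L‖)/2, where ⟨·,·⟩ is the Euclidean inner product and ‖·‖ the Euclidean norm. -/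
open Filter Topology Set

/-!
The numerator of `A(α, β)` lies between `0` and `(α + β)² / 2`: the lower bound comes from the
identity `(1 - αβ)² + (α + β)² = (α² + 1)(β² + 1)`, the upper one from the AM–GM inequality.
Hence `|A(α, β)| ≤ |α + β| / 2`. For `α = ⟪g_R, u⟫` and `β = ⟪g_L, u⟫` the sum `α + β` is
`⟪g_R + g_L, u⟫`, to which Cauchy–Schwarz applies.
-/

theorem sqrt_mul_le_add_div_two {x y : ℝ} (h : 0 ≤ x + y) : √(x * y) ≤ (x + y) / 2 :=
  Real.sqrt_le_iff.mpr ⟨by positivity, by linarith [four_mul_le_sq_add x y]⟩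

theorem one_sub_mul_le_sqrt_sq_add_one_mul (α β : ℝ) :
    1 - α * β ≤ √((α ^ 2 + 1) * (β ^ 2 + 1)) := by
  apply Real.le_sqrt_of_sq_le
  calc (1 - α * β) ^ 2
    _ ≤ (1 - α * β) ^ 2 + (α + β) ^ 2 := le_add_of_nonneg_right (sq_nonneg _)
    _ = (α ^ 2 + 1) * (β ^ 2 + 1) := by ring

theorem abs_specA_le_abs_add_div_two (α β : ℝ) : |specA α β| ≤ |α + β| / 2 := by
  rw [specA]
  split_ifs
  · rw [abs_zero]
    positivity
  · have numerator_nonneg : 0 ≤ α * β - 1 + √((α ^ 2 + 1) * (β ^ 2 + 1)) := by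
      linarith [one_sub_mul_le_sqrt_sq_add_one_mul α β]
    have numerator_le : α * β - 1 + √((α ^ 2 + 1) * (β ^ 2 + 1)) ≤ |α + β| / 2 * |α + β| :=
      calc α * β - 1 + √((α ^ 2 + 1) * (β ^ 2 + 1))
        _ ≤ α * β - 1 + ((α ^ 2 + 1) + (β ^ 2 + 1)) / 2 := by
          gcongr
          exact sqrt_mul_le_add_div_two (by positivity)
        _ = (α + β) ^ 2 / 2 := by ring
        _ = |α + β| / 2 * |α + β| := by rw [← sq_abs]; ring
    rw [abs_div, abs_of_nonneg numerator_nonneg]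
    exact div_le_of_le_mul₀ (abs_nonneg _) (by positivity) numerator_le

open RealInnerProductSpace in
theorem specular_directional_deriv_bound_general {E : Type*} [SeminormedAddCommGroup E]
    [InnerProductSpace ℝ E] (gR gL u : E) :
    |specA ⟪gR, u⟫ ⟪gL, u⟫| ≤ ‖gR + gL‖ / 2 * ‖u‖ :=
  calc |specA ⟪gR, u⟫ ⟪gL, u⟫|
    _ ≤ |⟪gR, u⟫ + ⟪gL, u⟫| / 2 := abs_specA_le_abs_add_div_two _ _
    _ = |⟪gR + gL, u⟫| / 2 := by rw [inner_add_left]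
    _ ≤ ‖gR + gL‖ * ‖u‖ / 2 := by gcongr; exact abs_real_inner_le_norm _ _
    _ = ‖gR + gL‖ / 2 * ‖u‖ := by ring

open RealInnerProductSpace in
theorem specular_directional_deriv_bound (n : ℕ) (hn : 0 < n)
    (gR gL u : EuclideanSpace ℝ (Fin n)) (hu : ‖u‖ = 1) :
    -((‖gR‖ + ‖gL‖) / 2) ≤ specA ⟪gR, u⟫ ⟪gL, u⟫ ∧
      specA ⟪gR, u⟫ ⟪gL, u⟫ ≤ (‖gR‖ + ‖gL‖) / 2 := by
  have bound := specular_directional_deriv_bound_general gR gL u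
  exact abs_le.mp (bound.trans (by rw [hu]; linarith [norm_add_le gR gL]))
end
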